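/- Let ν be a partition of length n = l(ν), let l and m be positive integers (playing the roles of l(μ) and μ_l). Then the following identity of rational functions in z and q holds: ∏_{j=1, ν_j ≥ m}^{n} (1+z q^{−l−ν_j+j})/(1+z q^{−l−ν_j+j+m}) · ∏_{j=1, ν_j < m}^{n} (1+z q^{−l−ν_j+j})/(1+z q^{−l+j}) = [∏_{k=m+1}^{ν_1+m} (1+z q^{m+ν^t_k−l−k+1})] / [∏_{k=1}^{ν_1} (1+z q^{ν^t_k−l−k+1})], where ν^t_k = 0 for k > ν_1; in particular both sides are finite products. (This holds vacuously with both sides equal to 1 when ν is the empty partition.) -/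

import Mathlib

/-!
The combinatorial identity (3.8) from the proof of Lemma 3.5 of the paper, an identity of
rational functions in `z` and `q`.  We work in `ℂ(z,q)`, realized as the fraction field of
`MvPolynomial (Fin 2) ℂ`, with `z` and `q` the images of the two polynomial variables.
-/

/-!
Write `a e = 1 + z q ^ (e - l)`. For a partition `g` with at most `n` parts, all at most `N`,
the numbers `j - g_j` (`1 ≤ j ≤ n`) and `g^t_k - k + 1` (`1 ≤ k ≤ N`) together exhaust the interval
`[1 - N, n]`, each integer occurring once (they label the vertical and horizontal steps of the
boundary of `g` in the `n × N` box). Hence `∏ a (j - g_j) * ∏ a (g^t_k - k + 1)` depends only on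
`n` and `N`, for any function `a` (`prod_rows_mul_prod_cols`).

Comparing `ν` with the partition `ρ_j = max (ν_j - m) 0`, whose conjugate is
`ρ^t_k = ν^t_{k+m}`, inside the same box gives the identity: the left-hand side is
`∏ a (j - ν_j) / ∏ a (j - ρ_j)` and the right-hand side is
`∏ a (ρ^t_k - k + 1) / ∏ a (ν^t_k - k + 1)`. Passing between quotients and products uses that
no factor `1 + z q ^ e` vanishes.
-/

open scoped BigOperators

/-- A partition: a finitely supported antitone function `ℕ → ℕ`;
`P.f j` is the part `ν_{j+1}` (0-indexed). -/
structure NOPartition where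
  f : ℕ →₀ ℕ
  antitone : ∀ ⦃m n : ℕ⦄, m ≤ n → f n ≤ f m

namespace NOPartition

/-- `conj P k = ν^t_k`, the number of parts of size at least `k` (1-indexed). -/
noncomputable def conj (P : NOPartition) (k : ℕ) : ℕ := Nat.card {j : ℕ // k ≤ P.f j}

/-- The length `l(ν)`, i.e. the number of (nonzero) parts. -/
noncomputable def length (P : NOPartition) : ℕ := P.f.support.card

end NOPartition

noncomputable section

/-- The field `ℂ(z,q)` of rational functions in two variables. -/
abbrev FF := FractionRing (MvPolynomial (Fin 2) ℂ)

/-- The rational function `z`. -/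
def zF : FF := algebraMap (MvPolynomial (Fin 2) ℂ) FF (MvPolynomial.X 0)

/-- The rational function `q`. -/
def qF : FF := algebraMap (MvPolynomial (Fin 2) ℂ) FF (MvPolynomial.X 1)

open Finset in
/-- Complementarity of row and column labels of a partition in an `n × N` box, in multiplicative
form. Rows and columns are 0-indexed, and the right-hand side is the product of `a` over the
integers of `[1 - N, n]`. -/
theorem prod_rows_mul_prod_cols {M : Type*} [CommMonoid M] (a : ℤ → M) (g : ℕ → ℕ)
    (hg : Antitone g) (N : ℕ) (hN : g 0 ≤ N) (n : ℕ) :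
    (∏ j ∈ range n, a ((j : ℤ) + 1 - g j)) *
      (∏ k ∈ range N, a ((#{j ∈ range n | k < g j} : ℤ) - k)) =
    (∏ k ∈ range N, a (-(k : ℤ))) * ∏ j ∈ range n, a ((j : ℤ) + 1) := by
  induction n with
  | zero => simp
  | succ n ih =>
    obtain ⟨w, rfl⟩ := Nat.exists_eq_add_of_le ((hg (Nat.zero_le n)).trans hN)
    -- The columns `k < g n` have height `n` before, and `n + 1` after, row `n` is added.
    have hfull : ∀ k < g n, ∀ i ≤ n + 1, #{j ∈ range i | k < g j} = i := by
      intro k hk i hi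
      rw [filter_true_of_mem, card_range]
      intro j hj
      exact hk.trans_le (hg (by have := mem_range.1 hj; omega))
    have hold : ∏ k ∈ range (g n), a ((#{j ∈ range n | k < g j} : ℤ) - k) =
        ∏ k ∈ range (g n), a ((n : ℤ) - k) :=
      prod_congr rfl fun k hk => by
        rw [hfull k (mem_range.1 hk) n (by omega)]
    have hnew : ∏ k ∈ range (g n), a ((#{j ∈ range (n + 1) | k < g j} : ℤ) - k) =
        ∏ k ∈ range (g n), a ((n : ℤ) + 1 - k) :=
      prod_congr rfl fun k hk => by
        rw [hfull k (mem_range.1 hk) (n + 1) le_rfl]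
        push_cast; rfl
    have hrest : ∏ k ∈ range w, a ((#{j ∈ range (n + 1) | g n + k < g j} : ℤ) - (g n + k : ℕ)) =
        ∏ k ∈ range w, a ((#{j ∈ range n | g n + k < g j} : ℤ) - (g n + k : ℕ)) :=
      prod_congr rfl fun k _ => by
        rw [range_add_one, filter_insert, if_neg (by omega)]
    have htel : (∏ k ∈ range (g n), a ((n : ℤ) + 1 - k)) * a ((n : ℤ) + 1 - g n) =
        (∏ k ∈ range (g n), a ((n : ℤ) - k)) * a ((n : ℤ) + 1) := by
      rw [← prod_range_succ (fun k : ℕ => a ((n : ℤ) + 1 - k)), prod_range_succ']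
      congr 1
      exact prod_congr rfl fun k _ => by congr 1; push_cast; ring
    rw [prod_range_add _ (g n) w, hold] at ih
    rw [prod_range_add (fun k : ℕ => a ((#{j ∈ range (n + 1) | k < g j} : ℤ) - k)) (g n) w,
      hnew, hrest, prod_range_succ, prod_range_succ,
      ← mul_assoc (∏ k ∈ range (g n + w), a (-(k : ℤ))), ← ih]
    generalize (∏ k ∈ range w, a ((#{j ∈ range n | g n + k < g j} : ℤ) - (g n + k : ℕ))) = R
    generalize (∏ j ∈ range n, a ((j : ℤ) + 1 - g j)) = S
    calc _ = S * ((∏ k ∈ range (g n), a ((n : ℤ) + 1 - k)) * a ((n : ℤ) + 1 - g n)) * R := by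
          ac_rfl
      _ = _ := by rw [htel]; ac_rfl

theorem one_add_zF_mul_qF_zpow_ne_zero (e : ℤ) : 1 + zF * qF ^ e ≠ 0 := by
  have hinj := IsFractionRing.injective (MvPolynomial (Fin 2) ℂ) FF
  -- After clearing denominators, the polynomial takes the value `1` at `z = 0`, `q = 1`.
  have key : ∀ p : MvPolynomial (Fin 2) ℂ, MvPolynomial.eval ![0, 1] p = 1 →
      algebraMap (MvPolynomial (Fin 2) ℂ) FF p ≠ 0 := by
    intro p hp h0
    rw [map_eq_zero_iff _ hinj] at h0
    simp [h0] at hp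
  have hq : qF ≠ 0 := key _ (by simp)
  obtain ⟨i, rfl | rfl⟩ := e.eq_nat_or_neg
  · have := key (1 + MvPolynomial.X 0 * MvPolynomial.X 1 ^ i) (by simp)
    simpa [zF, qF] using this
  · have h := key (MvPolynomial.X 1 ^ i + MvPolynomial.X 0) (by simp)
    have h' : qF ^ i + zF ≠ 0 := by simpa [zF, qF] using h
    intro h0
    apply h'
    rw [zpow_neg, zpow_natCast] at h0
    have hqi : qF ^ i ≠ 0 := pow_ne_zero _ hq
    field_simp at h0
    simpa using h0

namespace NOPartition

theorem lt_length_iff (P : NOPartition) (j : ℕ) : j < P.length ↔ P.f j ≠ 0 := by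
  -- The support is a finite initial segment of `ℕ`, hence equal to `range` of its cardinality.
  have hlow : ∀ i j : ℕ, i ≤ j → P.f j ≠ 0 → P.f i ≠ 0 := fun i j hij hj => by
    have := P.antitone hij
    omega
  constructor
  · intro hj h0
    have hsub : P.f.support ⊆ Finset.range j := fun i hi => by
      rw [Finsupp.mem_support_iff] at hi
      by_contra hij
      exact hlow j i (by simpa using hij) hi h0
    have := Finset.card_le_card hsub
    rw [Finset.card_range] at this
    exact absurd hj (not_lt.2 this)
  · intro hj
    have hsub : Finset.range (j + 1) ⊆ P.f.support := fun i hi =>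
      Finsupp.mem_support_iff.2 (hlow i j (by simpa [Nat.lt_succ_iff] using hi) hj)
    have := Finset.card_le_card hsub
    rwa [Finset.card_range] at this

theorem conj_eq_card_filter (P : NOPartition) (k : ℕ) (hk : 0 < k) :
    P.conj k = (Finset.filter (fun j => k ≤ P.f j) (Finset.range P.length)).card := by
  unfold conj
  refine Nat.subtype_card _ fun j => ?_
  rw [Finset.mem_filter, Finset.mem_range, lt_length_iff]
  exact ⟨fun h => h.2, fun h => ⟨by omega, h⟩⟩

end NOPartition

/-- **Equation (3.8) of the paper.**  For a partition `ν` of length `n` and positive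
integers `l`, `m` (playing the roles of `l(μ)` and `μ_l`),
`∏_{j≤n, ν_j≥m} (1+zq^{-l-ν_j+j})/(1+zq^{-l-ν_j+j+m})
   · ∏_{j≤n, ν_j<m} (1+zq^{-l-ν_j+j})/(1+zq^{-l+j})
 = ∏_{k=m+1}^{ν_1+m} (1+zq^{m+ν^t_k-l-k+1}) / ∏_{k=1}^{ν_1} (1+zq^{ν^t_k-l-k+1})`
in `ℂ(z,q)`.  (The index `j` below is 0-indexed, so `j+1` is the 1-indexed row.) -/
theorem rational_function_identity (ν : NOPartition) (l m : ℕ) (hl : 0 < l) (hm : 0 < m) :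
    (∏ j ∈ Finset.range ν.length,
      if m ≤ ν.f j then
        (1 + zF * qF ^ (-(l : ℤ) - (ν.f j : ℤ) + ((j : ℤ) + 1))) /
          (1 + zF * qF ^ (-(l : ℤ) - (ν.f j : ℤ) + ((j : ℤ) + 1) + (m : ℤ)))
      else
        (1 + zF * qF ^ (-(l : ℤ) - (ν.f j : ℤ) + ((j : ℤ) + 1))) /
          (1 + zF * qF ^ (-(l : ℤ) + ((j : ℤ) + 1))))
    = (∏ k ∈ Finset.range (ν.f 0),
        (1 + zF * qF ^ ((m : ℤ) + (ν.conj (m + 1 + k) : ℤ) - (l : ℤ)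
            - ((m : ℤ) + 1 + (k : ℤ)) + 1))) /
      (∏ k ∈ Finset.range (ν.f 0),
        (1 + zF * qF ^ ((ν.conj (k + 1) : ℤ) - (l : ℤ) - ((k : ℤ) + 1) + 1))) := by
  set a : ℤ → FF := fun e => 1 + zF * qF ^ (e - l) with ha
  have ha0 : ∀ e, a e ≠ 0 := fun e => one_add_zF_mul_qF_zpow_ne_zero _
  have hν := prod_rows_mul_prod_cols a (fun j => ν.f j) ν.antitone (ν.f 0) le_rfl ν.length
  have hρ := prod_rows_mul_prod_cols a (fun j => ν.f j - m)
    (fun i j hij => Nat.sub_le_sub_right (ν.antitone hij) m) (ν.f 0) (Nat.sub_le _ _) ν.length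
  have hcross := hν.trans hρ.symm
  have hL : ∀ j : ℕ, (if m ≤ ν.f j then
        (1 + zF * qF ^ (-(l : ℤ) - (ν.f j : ℤ) + ((j : ℤ) + 1))) /
          (1 + zF * qF ^ (-(l : ℤ) - (ν.f j : ℤ) + ((j : ℤ) + 1) + (m : ℤ)))
      else
        (1 + zF * qF ^ (-(l : ℤ) - (ν.f j : ℤ) + ((j : ℤ) + 1))) /
          (1 + zF * qF ^ (-(l : ℤ) + ((j : ℤ) + 1)))) =
      a ((j : ℤ) + 1 - (ν.f j : ℕ)) / a ((j : ℤ) + 1 - (ν.f j - m : ℕ)) := by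
    intro j
    simp only [ha]
    split_ifs with h
    · rw [Nat.cast_sub h]
      ring_nf
    · rw [Nat.sub_eq_zero_of_le (by omega)]
      push_cast
      ring_nf
  have hN : ∀ k : ℕ, 1 + zF * qF ^ ((m : ℤ) + (ν.conj (m + 1 + k) : ℤ) - (l : ℤ)
        - ((m : ℤ) + 1 + (k : ℤ)) + 1) =
      a (((Finset.range ν.length).filter (fun j => k < ν.f j - m)).card - k) := by
    intro k
    rw [ν.conj_eq_card_filter _ (by omega)]
    have : ∀ j, m + 1 + k ≤ ν.f j ↔ k < ν.f j - m := fun j => by omega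
    simp only [ha, this]
    ring_nf
  have hD : ∀ k : ℕ, 1 + zF * qF ^ ((ν.conj (k + 1) : ℤ) - (l : ℤ) - ((k : ℤ) + 1) + 1) =
      a (((Finset.range ν.length).filter (fun j => k < ν.f j)).card - k) := by
    intro k
    rw [ν.conj_eq_card_filter _ (by omega)]
    simp only [ha, Nat.succ_le_iff]
    ring_nf
  simp only [hL, hN, hD]
  rw [Finset.prod_div_distrib, div_eq_div_iff (Finset.prod_ne_zero_iff.2 fun _ _ => ha0 _)
    (Finset.prod_ne_zero_iff.2 fun _ _ => ha0 _), hcross, mul_comm]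

end
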